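/- Let n ≥ 1. Let R^{S_{n+1}} denote the subring of S_{n+1}-invariant elements of R (symmetric Laurent polynomials). The R-algebra map k : R ⊗_{R^{S_{n+1}}} R → Maps(S_{n+1}, R) determined on decomposable elements by k(f ⊗ g)(w) = (w·f)·g is a well-defined ring homomorphism, and it is a ring isomorphism onto K_α(Γ). -/

import Mathlib

open scoped TensorProduct

/-- The Laurent polynomial ring `R = ℤ[z₁^{±1},…,z_n^{±1}]`, realized as the group
algebra of `ℤⁿ` over `ℤ`. -/
abbrev Laur (n : ℕ) : Type := AddMonoidAlgebra ℤ (Fin n → ℤ)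

/-- The variable `z_j ∈ R`. -/
noncomputable def Z (n : ℕ) (j : Fin n) : Laur n :=
  AddMonoidAlgebra.single (Pi.single j 1) 1

/-- The action of `σ ∈ S_n` on `R` by the ring automorphism permuting the variables,
`σ·z_i = z_{σ(i)}`. -/
noncomputable def permAut (n : ℕ) (σ : Equiv.Perm (Fin n)) : Laur n ≃ₐ[ℤ] Laur n :=
  AddMonoidAlgebra.domCongr ℤ ℤ
    { Equiv.piCongrLeft' (fun _ => ℤ) σ with map_add' := fun _ _ => rfl }

/-- Membership in `K_α(Γ)` for the permutahedron `Γ` (GKM graph of `Fl(ℂ^{n+1})`, vertex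
set `S_{n+1}`, edges `σ ∼ σ(i j)` with label `z_{σ(i)} − z_{σ(j)}`). -/
def IsKPClass (n : ℕ) (h : Equiv.Perm (Fin (n + 1)) → Laur (n + 1)) : Prop :=
  ∀ (σ : Equiv.Perm (Fin (n + 1))) (i j : Fin (n + 1)), i ≠ j →
    (Z (n + 1) (σ i) - Z (n + 1) (σ j)) ∣ h σ - h (σ * Equiv.swap i j)

/-- The subring `R^{S_n}` of symmetric Laurent polynomials. -/
noncomputable def Rsym (n : ℕ) : Subring (Laur n) where
  carrier := {f | ∀ σ : Equiv.Perm (Fin n), permAut n σ f = f}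
  mul_mem' := fun {a b} ha hb σ => by rw [map_mul, ha σ, hb σ]
  one_mem' := fun σ => map_one _
  add_mem' := fun {a b} ha hb σ => by rw [map_add, ha σ, hb σ]
  zero_mem' := fun σ => map_zero _
  neg_mem' := fun {a} ha σ => by rw [map_neg, ha σ]



lemma permAut_single (m : ℕ) (σ : Equiv.Perm (Fin m)) (a : Fin m → ℤ) (c : ℤ) :
    permAut m σ (AddMonoidAlgebra.single a c) =
      AddMonoidAlgebra.single (fun b => a (σ.symm b)) c := by
  simp only [permAut, AddMonoidAlgebra.domCongr_single]
  rfl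

lemma permAut_Z (m : ℕ) (σ : Equiv.Perm (Fin m)) (i : Fin m) :
    permAut m σ (Z m i) = Z m (σ i) := by
  rw [Z, permAut_single, Z]
  congr 1
  funext b
  simp only [Pi.single_apply, Equiv.symm_apply_eq]

lemma permAut_mul (m : ℕ) (σ τ : Equiv.Perm (Fin m)) (f : Laur m) :
    permAut m (σ * τ) f = permAut m σ (permAut m τ f) := by
  induction f using AddMonoidAlgebra.induction_linear with
  | zero => simp
  | add f g hf hg => simp [hf, hg]
  | single a c => simp only [permAut_single]; rfl

lemma permAut_one (m : ℕ) (f : Laur m) : permAut m 1 f = f := by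
  induction f using AddMonoidAlgebra.induction_linear with
  | zero => simp
  | add f g hf hg => simp [hf, hg]
  | single a c => simp only [permAut_single]; rfl

/-- exponent map of the substitution `z_i ↦ z_j` -/
def substExp (m : ℕ) (i j : Fin m) : (Fin m → ℤ) →+ (Fin m → ℤ) where
  toFun a := a + a i • (Pi.single j 1 - Pi.single i 1)
  map_zero' := by simp
  map_add' a b := by simp only [Pi.add_apply, add_smul]; abel

/-- the substitution `z_i ↦ z_j` -/
noncomputable def zsub (m : ℕ) (i j : Fin m) : Laur m →+* Laur m :=
  AddMonoidAlgebra.mapDomainRingHom ℤ (substExp m i j)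

lemma subst_single (m : ℕ) (i j : Fin m) (a : Fin m → ℤ) (c : ℤ) :
    zsub m i j (AddMonoidAlgebra.single a c) =
      AddMonoidAlgebra.single (a + a i • (Pi.single j 1 - Pi.single i 1)) c := by
  simp [zsub, substExp]

lemma subst_Z (m : ℕ) (i j k : Fin m) :
    zsub m i j (Z m k) = Z m (if k = i then j else k) := by
  rw [Z, subst_single, Z]
  congr 1
  by_cases h : k = i
  · subst h; simp
  · simp [h, Pi.single_apply, Ne.symm h]

lemma dvd_single (m : ℕ) (i j : Fin m) (a : Fin m → ℤ) (k : ℤ) :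
    (Z m i - Z m j) ∣ (AddMonoidAlgebra.single a 1 : Laur m) -
      AddMonoidAlgebra.single (a + k • (Pi.single j 1 - Pi.single i 1)) 1 := by
  have step : ∀ b : Fin m → ℤ, (Z m i - Z m j) ∣ (AddMonoidAlgebra.single b 1 : Laur m) -
      AddMonoidAlgebra.single (b + (Pi.single j 1 - Pi.single i 1)) 1 := by
    intro b
    refine ⟨AddMonoidAlgebra.single (b - Pi.single i 1) 1, ?_⟩
    simp only [Z, sub_mul, AddMonoidAlgebra.single_mul_single, mul_one]
    congr 2 <;> abel
  induction k using Int.induction_on with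
  | zero => simp
  | succ k ih =>
    have := dvd_add ih (step (a + (k : ℤ) • (Pi.single j 1 - Pi.single i 1)))
    rw [add_assoc a, ← add_one_zsmul, sub_add_sub_cancel] at this
    exact this
  | pred k ih =>
    have := dvd_sub ih (step (a + (-(k : ℤ) - 1) • (Pi.single j 1 - Pi.single i 1)))
    rw [add_assoc a, ← add_one_zsmul, sub_add_cancel, sub_sub_sub_cancel_right] at this
    exact this

lemma dvd_sub_subst (m : ℕ) (i j : Fin m) (f : Laur m) :
    (Z m i - Z m j) ∣ f - zsub m i j f := by
  induction f using AddMonoidAlgebra.induction_linear with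
  | zero => simp
  | add f g hf hg => rw [map_add, add_sub_add_comm]; exact dvd_add hf hg
  | single a c =>
    rw [subst_single]
    have := (dvd_single m i j a (a i)).mul_left (c : Laur m)
    convert this using 1
    rw [mul_sub]
    congr 1 <;> rw [← zsmul_eq_mul, AddMonoidAlgebra.smul_single] <;> simp

lemma dvd_iff_subst (m : ℕ) (i j : Fin m) (f : Laur m) :
    (Z m i - Z m j) ∣ f ↔ zsub m i j f = 0 := by
  constructor
  · rintro ⟨c, rfl⟩
    rw [map_mul, map_sub, subst_Z, subst_Z]
    by_cases h : j = i <;> simp [h]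
  · intro h
    simpa [h] using dvd_sub_subst m i j f

lemma Z_inj (m : ℕ) : Function.Injective (Z m) := by
  intro i j h
  have := AddMonoidAlgebra.single_left_injective (one_ne_zero) h
  by_contra hne
  have h2 := congrFun this i
  simp [Pi.single_apply, hne] at h2

lemma prime_sub (m : ℕ) (i j : Fin m) (h : i ≠ j) : Prime (Z m i - Z m j) := by
  refine ⟨sub_ne_zero.2 fun e => h (Z_inj m e), ?_, ?_⟩
  · intro hu
    have := (dvd_iff_subst m i j 1).1 hu.dvd
    simp at this
  · intro a b hab
    simp only [dvd_iff_subst, map_mul, mul_eq_zero] at hab ⊢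
    exact hab

lemma dvd_sub_swap (m : ℕ) (i j : Fin m) (f : Laur m) :
    (Z m i - Z m j) ∣ f - permAut m (Equiv.swap i j) f := by
  rw [dvd_iff_subst, map_sub, sub_eq_zero]
  induction f using AddMonoidAlgebra.induction_linear with
  | zero => simp
  | add f g hf hg => simp [hf, hg]
  | single a c =>
    rw [permAut_single, subst_single, subst_single]
    congr 1
    funext b
    by_cases hij : i = j
    · subst hij; simp
    by_cases h1 : b = i
    · subst h1; simp [hij]
    by_cases h2 : b = j
    · subst h2; simp [hij, Ne.symm hij, add_comm]
    · simp [h1, h2, Equiv.swap_apply_of_ne_of_ne]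

/-- Vandermonde determinant -/
noncomputable def vdm (m : ℕ) : Laur m := ∏ i : Fin m, ∏ j ∈ Finset.Ioi i, (Z m j - Z m i)

lemma vdm_perm (m : ℕ) (σ : Equiv.Perm (Fin m)) :
    permAut m σ (vdm m) = ((Equiv.Perm.sign σ : ℤ) : Laur m) * vdm m := by
  have h1 : permAut m σ (vdm m) = (Matrix.vandermonde (fun i => Z m (σ i))).det := by
    rw [Matrix.det_vandermonde, vdm]
    simp [map_prod, permAut_Z]
  rw [h1, vdm, ← Matrix.det_vandermonde, ← Matrix.det_permute]
  rfl

lemma vdm_ne_zero (m : ℕ) : vdm m ≠ 0 := by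
  rw [vdm, ← Matrix.det_vandermonde, Matrix.det_vandermonde_ne_zero_iff]
  exact Z_inj m

lemma vdm_dvd (m : ℕ) (P : Laur m) (hP : ∀ i j, i ≠ j → (Z m i - Z m j) ∣ P) : vdm m ∣ P := by
  rw [vdm, Finset.prod_sigma']
  generalize hs : (Finset.univ.sigma fun i : Fin m => Finset.Ioi i) = s
  have hs' : ∀ x ∈ s, x.1 < x.2 := by
    intro x hx; rw [← hs] at hx; simpa using hx
  clear hs
  induction s using Finset.induction_on with
  | empty => simp
  | insert x s hx ih =>
    rw [Finset.prod_insert hx]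
    obtain ⟨c, hc⟩ := ih fun y hy => hs' y (Finset.mem_insert_of_mem hy)
    have hlt := hs' x (Finset.mem_insert_self _ _)
    have hp := prime_sub m x.2 x.1 hlt.ne'
    have := hP x.2 x.1 hlt.ne'
    rw [hc] at this
    rcases hp.dvd_or_dvd this with h | h
    · exfalso
      obtain ⟨y, hy, hd⟩ := (hp.dvd_finsetProd_iff _).1 h
      have hlty := hs' y (Finset.mem_insert_of_mem hy)
      rw [dvd_iff_subst, map_sub, subst_Z, subst_Z, sub_eq_zero] at hd
      have hd := Z_inj m hd
      obtain ⟨x1, x2⟩ := x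
      obtain ⟨y1, y2⟩ := y
      simp only at hd hlt hlty
      have : y1 = x1 ∧ y2 = x2 := by
        split_ifs at hd <;> omega
      obtain ⟨rfl, rfl⟩ := this
      exact hx hy
    · rw [hc, mul_comm]
      exact mul_dvd_mul_left _ h

/-- twisted sum -/
noncomputable def asum (m : ℕ) (h : Equiv.Perm (Fin m) → Laur m) : Laur m :=
  ∑ w, ((Equiv.Perm.sign w : ℤ) : Laur m) * h w

lemma asum_dvd (n : ℕ) (h : Equiv.Perm (Fin (n+1)) → Laur (n+1)) (hh : IsKPClass n h) :
    vdm (n+1) ∣ asum (n+1) h := by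
  apply vdm_dvd
  intro i j hij
  rw [dvd_iff_subst, asum, map_sum]
  refine Finset.sum_involution (fun w _ => Equiv.swap i j * w) ?_ ?_ ?_ ?_
  · intro w _
    have := hh w (w.symm i) (w.symm j) (by simpa using hij)
    rw [Equiv.apply_symm_apply, Equiv.apply_symm_apply, dvd_iff_subst, map_sub, sub_eq_zero] at this
    have e : w * Equiv.swap (w.symm i) (w.symm j) = Equiv.swap i j * w := by
      rw [Equiv.mul_swap_eq_swap_mul]; simp
    rw [e] at this
    rw [map_mul, map_mul, this, Equiv.Perm.sign_mul, Equiv.Perm.sign_swap hij]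
    simp
  · intro w _ _ e
    have : Equiv.swap i j = 1 := by simpa using e
    exact hij (Equiv.swap_eq_one_iff.1 this)
  · intro w _; exact Finset.mem_univ _
  · intro w _; simp [← mul_assoc]

/-- the action as an algebra map over invariants -/
noncomputable def permAlg (m : ℕ) (w : Equiv.Perm (Fin m)) : Laur m →ₐ[Rsym m] Laur m :=
  { (permAut m w : Laur m →+* Laur m) with
    commutes' := fun r => r.2 w }

noncomputable def kmap (m : ℕ) : (Laur m ⊗[Rsym m] Laur m) →+* (Equiv.Perm (Fin m) → Laur m) :=
  RingHom.pi fun w =>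
    (Algebra.TensorProduct.productMap (permAlg m w) (AlgHom.id (Rsym m) (Laur m))).toRingHom

lemma kmap_tmul (m : ℕ) (f g : Laur m) (w : Equiv.Perm (Fin m)) :
    kmap m (f ⊗ₜ g) w = permAut m w f * g := by
  have h : kmap m (f ⊗ₜ g) w = Algebra.TensorProduct.productMap (permAlg m w)
      (AlgHom.id (Rsym m) (Laur m)) (f ⊗ₜ g) := rfl
  rw [h, Algebra.TensorProduct.productMap_apply_tmul]
  rfl

lemma kmap_class (n : ℕ) (x) : IsKPClass n (kmap (n+1) x) := by
  intro σ i j hij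
  induction x using TensorProduct.induction_on with
  | zero => simp
  | add x y hx hy =>
    rw [map_add, Pi.add_apply, Pi.add_apply, add_sub_add_comm]; exact dvd_add hx hy
  | tmul f g =>
    rw [kmap_tmul, kmap_tmul, permAut_mul, ← sub_mul, ← map_sub, ← permAut_Z, ← permAut_Z,
      ← map_sub]
    exact (map_dvd _ (dvd_sub_swap _ i j f)).mul_right g

lemma class_mul (n : ℕ) (h h') (hh : IsKPClass n h) (hh' : IsKPClass n h') :
    IsKPClass n (h * h') := by
  intro σ i j hij
  have e : (h * h') σ - (h * h') (σ * Equiv.swap i j) =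
      (h σ - h (σ * Equiv.swap i j)) * h' σ +
      h (σ * Equiv.swap i j) * (h' σ - h' (σ * Equiv.swap i j)) := by
    simp only [Pi.mul_apply]; ring
  rw [e]
  exact dvd_add ((hh σ i j hij).mul_right _) ((hh' σ i j hij).mul_left _)

lemma exists_diag (m : ℕ) : ∃ S : Finset (Laur m × Laur m), ∀ w : Equiv.Perm (Fin m),
    ∑ p ∈ S, permAut m w p.1 * p.2 = if w = 1 then vdm m else 0 := by
  let D : Laur m ⊗[Rsym m] Laur m :=
    ∏ i : Fin m, ∏ j ∈ Finset.Ioi i, (Z m j ⊗ₜ 1 - 1 ⊗ₜ Z m i)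
  obtain ⟨S, hS⟩ := TensorProduct.exists_finset D
  refine ⟨S, fun w => ?_⟩
  have h1 : kmap m D w = ∑ p ∈ S, permAut m w p.1 * p.2 := by
    rw [hS, map_sum, Finset.sum_apply]
    simp only [kmap_tmul]
  have h2 : kmap m D w = ∏ i : Fin m, ∏ j ∈ Finset.Ioi i, (Z m (w j) - Z m i) := by
    simp only [D, map_prod, Finset.prod_apply, map_sub, Pi.sub_apply, kmap_tmul, permAut_Z,
      mul_one, map_one, one_mul]
  rw [← h1, h2]
  split_ifs with hw
  · subst hw; rfl
  · have : ∃ j, w j < j := by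
      by_contra! hc
      apply hw
      ext1 j
      have hsum : ∑ j, ((w j : Fin m) : ℕ) = ∑ j : Fin m, (j : ℕ) :=
        Equiv.sum_comp w (fun j : Fin m => (j : ℕ))
      have := (Finset.sum_eq_sum_iff_of_le (s := Finset.univ) (f := fun j : Fin m => (j : ℕ))
        (g := fun j => ((w j : Fin m) : ℕ)) (fun j _ => hc j)).1 hsum.symm j (Finset.mem_univ _)
      exact (Fin.ext this).symm
    obtain ⟨j, hj⟩ := this
    refine Finset.prod_eq_zero (Finset.mem_univ (w j)) ?_
    exact Finset.prod_eq_zero (Finset.mem_Ioi.2 hj) (sub_self _)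

open Classical in
/-- trace -/
noncomputable def tr (m : ℕ) (h : Equiv.Perm (Fin m) → Laur m) : Laur m :=
  if H : vdm m ∣ asum m h then H.choose else 0

lemma tr_spec (n : ℕ) (h) (hh : IsKPClass n h) : vdm (n+1) * tr (n+1) h = asum (n+1) h := by
  have H := asum_dvd n h hh
  rw [tr, dif_pos H]
  exact H.choose_spec.symm

lemma sign_sq (m : ℕ) (w : Equiv.Perm (Fin m)) :
    ((Equiv.Perm.sign w : ℤ) : Laur m) * ((Equiv.Perm.sign w : ℤ) : Laur m) = 1 := by
  rw [← Int.cast_mul, ← Units.val_mul, Int.units_mul_self]; simp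

lemma recon (n : ℕ) (S : Finset (Laur (n+1) × Laur (n+1)))
    (hS : ∀ w : Equiv.Perm (Fin (n+1)),
      ∑ p ∈ S, permAut (n+1) w p.1 * p.2 = if w = 1 then vdm (n+1) else 0)
    (h) (hh : IsKPClass n h) (u : Equiv.Perm (Fin (n+1))) :
    ∑ p ∈ S, permAut (n+1) u p.2 * tr (n+1) (h * kmap (n+1) (p.1 ⊗ₜ 1)) = h u := by
  apply mul_left_cancel₀ (vdm_ne_zero (n+1))
  have hS' : ∀ w : Equiv.Perm (Fin (n+1)),
      ∑ p ∈ S, permAut (n+1) w p.1 * permAut (n+1) u p.2 =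
        if w = u then permAut (n+1) u (vdm (n+1)) else 0 := by
    intro w
    have := congrArg (permAut (n+1) u) (hS (u⁻¹ * w))
    rw [map_sum] at this
    simp only [map_mul, ← permAut_mul, mul_inv_cancel_left, inv_mul_eq_one] at this
    rw [this]
    by_cases e : w = u
    · simp [e]
    · simp [e, Ne.symm e]
  calc _ = ∑ p ∈ S, permAut (n+1) u p.2 * asum (n+1) (h * kmap (n+1) (p.1 ⊗ₜ 1)) := by
        rw [Finset.mul_sum]
        refine Finset.sum_congr rfl fun p _ => ?_
        rw [← tr_spec n _ (class_mul n _ _ hh (kmap_class n _))]; ring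
    _ = ∑ w, ((Equiv.Perm.sign w : ℤ) : Laur (n+1)) * h w *
          ∑ p ∈ S, permAut (n+1) w p.1 * permAut (n+1) u p.2 := by
        simp only [asum, Finset.mul_sum]
        rw [Finset.sum_comm]
        refine Finset.sum_congr rfl fun w _ => Finset.sum_congr rfl fun p _ => ?_
        rw [Pi.mul_apply, kmap_tmul]; ring
    _ = _ := by
        simp only [hS', mul_ite, mul_zero, Finset.sum_ite_eq', Finset.mem_univ, if_true, vdm_perm]
        linear_combination (h u * vdm (n+1)) * sign_sq (n+1) u

lemma tr_inv (n : ℕ) (f : Laur (n+1)) : tr (n+1) (kmap (n+1) (f ⊗ₜ 1)) ∈ Rsym (n+1) := by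
  intro u
  have hs := tr_spec n _ (kmap_class n (f ⊗ₜ 1))
  apply mul_left_cancel₀ (vdm_ne_zero (n+1))
  have h2 := congrArg (permAut (n+1) u) hs
  have h3 : permAut (n+1) u (asum (n+1) (kmap (n+1) (f ⊗ₜ 1))) =
      ((Equiv.Perm.sign u : ℤ) : Laur (n+1)) * asum (n+1) (kmap (n+1) (f ⊗ₜ 1)) := by
    simp only [asum, map_sum, Finset.mul_sum, kmap_tmul, mul_one, map_mul, map_intCast,
      ← permAut_mul]
    refine Fintype.sum_equiv (Equiv.mulLeft u) _ _ fun w => ?_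
    rw [Equiv.coe_mulLeft, Equiv.Perm.sign_mul, Units.val_mul, Int.cast_mul]
    linear_combination (-((Equiv.Perm.sign w : ℤ) : Laur (n+1)) * permAut (n+1) (u * w) f) *
      sign_sq (n+1) u
  rw [h3, map_mul, vdm_perm, ← hs] at h2
  have h4 := congrArg (fun x => ((Equiv.Perm.sign u : ℤ) : Laur (n+1)) * x) h2
  simp only [← mul_assoc, sign_sq, one_mul] at h4
  exact h4

lemma tr_add (n : ℕ) (h h') (hh : IsKPClass n h) (hh' : IsKPClass n h') :
    tr (n+1) (h + h') = tr (n+1) h + tr (n+1) h' := by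
  have hc : IsKPClass n (h + h') := by
    intro σ i j hij
    rw [Pi.add_apply, Pi.add_apply, add_sub_add_comm]
    exact dvd_add (hh σ i j hij) (hh' σ i j hij)
  apply mul_left_cancel₀ (vdm_ne_zero (n+1))
  rw [mul_add, tr_spec n _ hh, tr_spec n _ hh', tr_spec n _ hc]
  simp [asum, mul_add, Finset.sum_add_distrib]

lemma tr_zero (n : ℕ) : tr (n+1) 0 = 0 := by
  have := tr_add n 0 0 (by intro σ i j _; simp) (by intro σ i j _; simp)
  simpa using this

lemma tr_tmul (n : ℕ) (f g : Laur (n+1)) :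
    tr (n+1) (kmap (n+1) (f ⊗ₜ g)) = tr (n+1) (kmap (n+1) (f ⊗ₜ 1)) * g := by
  apply mul_left_cancel₀ (vdm_ne_zero (n+1))
  rw [← mul_assoc, tr_spec n _ (kmap_class n _), tr_spec n _ (kmap_class n _)]
  simp only [asum, kmap_tmul, Finset.sum_mul, mul_one, mul_assoc]

lemma recon_tensor (n : ℕ) (S : Finset (Laur (n+1) × Laur (n+1)))
    (hS : ∀ w : Equiv.Perm (Fin (n+1)),
      ∑ p ∈ S, permAut (n+1) w p.1 * p.2 = if w = 1 then vdm (n+1) else 0)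
    (x : Laur (n+1) ⊗[Rsym (n+1)] Laur (n+1)) :
    ∑ p ∈ S, p.2 ⊗ₜ[Rsym (n+1)] tr (n+1) (kmap (n+1) x * kmap (n+1) (p.1 ⊗ₜ 1)) = x := by
  simp only [← map_mul]
  induction x using TensorProduct.induction_on with
  | zero => simp [tr_zero]
  | add x y hx hy =>
    conv_rhs => rw [← hx, ← hy]
    rw [← Finset.sum_add_distrib]
    refine Finset.sum_congr rfl fun p _ => ?_
    rw [add_mul, map_add, tr_add n _ _ (kmap_class n _) (kmap_class n _), TensorProduct.tmul_add]
  | tmul f g =>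
    have h0 := recon n S hS _ (kmap_class n (f ⊗ₜ 1)) 1
    simp only [← map_mul, permAut_one, Algebra.TensorProduct.tmul_mul_tmul, mul_one,
      kmap_tmul] at h0 ⊢
    conv_rhs => rw [← h0]
    rw [TensorProduct.sum_tmul]
    refine Finset.sum_congr rfl fun p _ => ?_
    rw [tr_tmul]
    have := TensorProduct.smul_tmul (R := Rsym (n+1))
      (⟨_, tr_inv n (f * p.1)⟩ : Rsym (n+1)) p.2 g
    rw [Subring.smul_def, Subring.smul_def, smul_eq_mul, smul_eq_mul] at this
    rw [← this, mul_comm]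

/-- there is a (necessarily unique) ring homomorphism as required. -/
theorem stmt12 (n : ℕ) (hn : 1 ≤ n) :
    ∃ k : (Laur (n + 1) ⊗[Rsym (n + 1)] Laur (n + 1)) →+*
        (Equiv.Perm (Fin (n + 1)) → Laur (n + 1)),
      (∀ (f g : Laur (n + 1)) (w : Equiv.Perm (Fin (n + 1))),
        k (f ⊗ₜ g) w = permAut (n + 1) w f * g) ∧
      Function.Injective k ∧
      Set.range k = {h | IsKPClass n h} := by
  obtain ⟨S, hS⟩ := exists_diag (n+1)
  refine ⟨kmap (n+1), kmap_tmul (n+1), ?_, ?_⟩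
  · intro x y hxy
    rw [← recon_tensor n S hS x, ← recon_tensor n S hS y, hxy]
  · ext h
    constructor
    · rintro ⟨x, rfl⟩
      exact kmap_class n x
    · intro hh
      refine ⟨∑ p ∈ S, p.2 ⊗ₜ[Rsym (n+1)] tr (n+1) (h * kmap (n+1) (p.1 ⊗ₜ 1)), ?_⟩
      funext u
      rw [map_sum, Finset.sum_apply]
      simp only [kmap_tmul]
      exact recon n S hS h hh u
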